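/- Let F be a field, G a finite group, and H ≤ G a subgroup. Then the permutation F[G]-module on the coset space of H in G is a projective F[G]-module if and only if the characteristic of F does not divide |H|. -/

import Mathlib

open MulAction
open scoped Classical

/-- The base point of the permutation module. -/
noncomputable def permBase (F : Type*) {G : Type*} [Field F] [Group G] (H : Subgroup G) :
    (Representation.ofMulAction F G (G ⧸ H)).asModule :=
  (Representation.ofMulAction F G (G ⧸ H)).asModuleEquiv.symm
    (MonoidAlgebra.single ((1 : G) : G ⧸ H) 1)

/-- The coefficients of `a • permBase`. -/
lemma coeff_smul_permBase {F G : Type*} [Field F] [Group G] [Fintype G] (H : Subgroup G)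
    (a : MonoidAlgebra F G) (q : G ⧸ H) :
    ((Representation.ofMulAction F G (G ⧸ H)).asModuleEquiv (a • permBase F H)).coeff q
      = ∑ g : G, if (g : G ⧸ H) = q then a.coeff g else 0 := by
  rw [Representation.asModuleEquiv_map_smul, permBase, LinearEquiv.apply_symm_apply]
  induction a using MonoidAlgebra.induction_linear with
  | zero => simp
  | add x y hx hy =>
    simp only [map_add, LinearMap.add_apply, MonoidAlgebra.coeff_add, Finsupp.add_apply, hx, hy]
    rw [← Finset.sum_add_distrib]
    refine Finset.sum_congr rfl fun g _ => ?_
    split_ifs <;> simp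
  | single g r =>
    rw [Representation.asAlgebraHom_single, LinearMap.smul_apply,
      Representation.ofMulAction_single, Finset.sum_eq_single g]
    · simp [MonoidAlgebra.coeff_single, Finsupp.single_apply]
    · intro b _ hb
      simp [MonoidAlgebra.coeff_single, Finsupp.single_apply, hb.symm]
    · simp

/-- Pullback of functions along `G → G ⧸ H`. -/
noncomputable def permPull (F : Type*) {G : Type*} [Field F] [Group G] [Fintype G]
    (H : Subgroup G) :
    (Representation.ofMulAction F G (G ⧸ H)).asModule →ₗ[F] MonoidAlgebra F G where
  toFun v := MonoidAlgebra.ofCoeff (Finsupp.equivFunOnFinite.symm fun g : G =>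
    ((Representation.ofMulAction F G (G ⧸ H)).asModuleEquiv v).coeff (g : G ⧸ H))
  map_add' v w := by ext g; simp
  map_smul' c v := by ext g; simp

lemma coeff_permPull {F G : Type*} [Field F] [Group G] [Fintype G] (H : Subgroup G)
    (v : (Representation.ofMulAction F G (G ⧸ H)).asModule) (g : G) :
    (permPull F H v).coeff g =
      ((Representation.ofMulAction F G (G ⧸ H)).asModuleEquiv v).coeff (g : G ⧸ H) := rfl

/-- The pullback is equivariant. -/
lemma permPull_single_smul {F G : Type*} [Field F] [Group G] [Fintype G] (H : Subgroup G)
    (g : G) (v : (Representation.ofMulAction F G (G ⧸ H)).asModule) :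
    permPull F H (MonoidAlgebra.single g (1 : F) • v)
      = MonoidAlgebra.single g (1 : F) • permPull F H v := by
  ext x
  rw [coeff_permPull, smul_eq_mul, MonoidAlgebra.coeff_single_mul_apply, coeff_permPull,
    Representation.asModuleEquiv_map_smul, Representation.asAlgebraHom_single, one_smul, one_mul,
    Representation.coeff_ofMulAction]
  rfl

/-- Each fibre of `G → G ⧸ H` has `|H|` elements. -/
lemma sum_fibre {F G : Type*} [Field F] [Group G] [Fintype G] (H : Subgroup G)
    (q : G ⧸ H) (c : F) :
    (∑ g : G, if (g : G ⧸ H) = q then c else 0) = (Fintype.card H : F) * c := by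
  obtain ⟨g₀, rfl⟩ := QuotientGroup.mk_surjective q
  rw [← Equiv.sum_comp (Equiv.mulLeft g₀)]
  have : ∀ g : G, (((Equiv.mulLeft g₀ g : G) : G ⧸ H) = (g₀ : G ⧸ H)) ↔ g ∈ H := by
    intro g
    rw [eq_comm, QuotientGroup.eq]
    simp
  simp only [this]
  rw [← Finset.sum_filter, Finset.sum_const, nsmul_eq_mul, Fintype.card_subtype]

/-- The permutation `F[G]`-module on the coset space `G ⧸ H` is projective if and only if
the characteristic of the field `F` does not divide `|H|`. -/
theorem stmt10 {F G : Type*} [Field F] [Group G] [Fintype G] (H : Subgroup G) :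
    Module.Projective (MonoidAlgebra F G)
        (Representation.ofMulAction F G (G ⧸ H)).asModule
      ↔ ¬ (ringChar F ∣ Fintype.card H) := by
  rw [← ringChar.spec]
  let e := (Representation.ofMulAction F G (G ⧸ H)).asModuleEquiv
  let p := LinearMap.toSpanSingleton (MonoidAlgebra F G)
    (Representation.ofMulAction F G (G ⧸ H)).asModule (permBase F H)
  let i := MonoidAlgebra.equivariantOfLinearOfComm (permPull F H) (permPull_single_smul H)
  have hpi : ∀ v, e (p (i v)) = (Fintype.card H : F) • e v := by
    intro v
    ext q
    change (e (permPull F H v • permBase F H)).coeff q = _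
    rw [coeff_smul_permBase, MonoidAlgebra.coeff_smul_apply, smul_eq_mul, ← sum_fibre H q]
    refine Finset.sum_congr rfl fun g _ => ?_
    split_ifs with h
    · rw [coeff_permPull, h]
    · rfl
  constructor
  · intro hproj h0
    have hsurj : Function.Surjective p := by
      intro v
      refine ⟨MonoidAlgebra.ofCoeff (Finsupp.equivFunOnFinite.symm fun g : G =>
        if g = (g : G ⧸ H).out then (e v).coeff (g : G ⧸ H) else 0), e.injective ?_⟩
      ext q
      rw [show p _ = _ • permBase F H from LinearMap.toSpanSingleton_apply _ _ _ _]
      rw [coeff_smul_permBase, Finset.sum_eq_single q.out]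
      · simp
      · intro b _ hb
        split_ifs with h
        · subst h
          simp [hb]
        · rfl
      · simp
    obtain ⟨s, hs⟩ := Module.projective_lifting_property p LinearMap.id hsurj
    have hfix : ∀ h ∈ H, (s (permBase F H)).coeff h = (s (permBase F H)).coeff 1 := by
      intro h hh
      have h1 : MonoidAlgebra.single h (1 : F) • permBase F H = permBase F H := by
        apply e.injective
        change e (_ • _) = _
        rw [Representation.asModuleEquiv_map_smul, Representation.asAlgebraHom_single, one_smul]
        simp only [permBase, LinearEquiv.apply_symm_apply, Representation.ofMulAction_single, e]
        congr 1
        change ((h * 1 : G) : G ⧸ H) = _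
        rw [eq_comm, QuotientGroup.eq]
        simpa using hh
      have h2 := congrArg (fun x => (s x).coeff h) h1
      simp only [map_smul, smul_eq_mul, MonoidAlgebra.coeff_single_mul_apply] at h2
      simpa using h2.symm
    have h3 := congrArg (fun f => (e (f (permBase F H))).coeff ((1 : G) : G ⧸ H)) hs
    change (e (s (permBase F H) • permBase F H)).coeff _ = (e (permBase F H)).coeff _ at h3
    rw [coeff_smul_permBase] at h3
    have h4 : ∀ g : G, (if (g : G ⧸ H) = ((1 : G) : G ⧸ H)
        then (s (permBase F H)).coeff g else 0) = if (g : G ⧸ H) = ((1 : G) : G ⧸ H)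
        then (s (permBase F H)).coeff 1 else 0 := by
      intro g
      split_ifs with h
      · apply hfix
        rw [eq_comm, QuotientGroup.eq] at h
        simpa using h
      · rfl
    simp only [h4] at h3
    rw [sum_fibre, h0, zero_mul] at h3
    simp [permBase, e] at h3
  · intro h0
    refine Module.Projective.of_split
      (MonoidAlgebra.equivariantOfLinearOfComm ((Fintype.card H : F)⁻¹ • permPull F H) ?_) p ?_
    · intro g v
      rw [LinearMap.smul_apply, LinearMap.smul_apply, permPull_single_smul, smul_comm]
    · ext v
      apply e.injective
      change e (((Fintype.card H : F)⁻¹ • permPull F H v) • permBase F H) = e v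
      rw [smul_assoc, map_smul]
      change (Fintype.card H : F)⁻¹ • e (p (i v)) = e v
      rw [hpi, smul_smul, inv_mul_cancel₀ h0, one_smul]
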